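/- arXiv:2301.05365 — 2 statements merged into one kernel-verified Lean document; each statement's English description precedes it below -/
import Mathlib

section
/- (Bayes/invariance step in the proof of the weighted MC randomization test.) Assume the proportionality hypothesis H₀^∝. Then the law of the tuple is invariant under drawing an index according to the weights and swapping it to the front: for every function φ : 𝒟^(m+1) → [0,∞], Σ_{(d₀,…,d_m) ∈ 𝒟^(m+1)} h(d₀,…,d_m) · Σ_{i=0}^m w_i(d₀,…,d_m) · φ(σ_i(d₀,…,d_m)) = Σ_{(d₀,…,d_m) ∈ 𝒟^(m+1)} h(d₀,…,d_m) · φ(d₀,…,d_m). Equivalently, if 𝔇 ~ h and, given 𝔇, an index I ∈ {0,…,m} is drawn with conditional probability w_i(𝔇), then σ_I(𝔇) has the same distribution as 𝔇. -/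
open scoped NNReal ENNReal Classical BigOperators

noncomputable section

/-- The joint law of the tuple `(D̃⁽⁰⁾, …, D̃⁽ᵐ⁾)`:
`h(d₀, …, d_m) = f(d₀) · ∏_{k=1}^m q(d_k | d₀)`. Here `q e d` denotes `q(e | d)`. -/
def jointLaw {D : Type*} (f : D → ℝ≥0) (q : D → D → ℝ≥0) (m : ℕ)
    (d : Fin (m + 1) → D) : ℝ≥0 :=
  f (d 0) * ∏ k ∈ Finset.univ.erase (0 : Fin (m + 1)), q (d k) (d 0)

/-- `σ_i` : the involution of `𝒟^(m+1)` swapping coordinates `0` and `i`. -/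
def swapTuple {D : Type*} (m : ℕ) (i : Fin (m + 1)) (d : Fin (m + 1) → D) :
    Fin (m + 1) → D :=
  d ∘ Equiv.swap 0 i

/-- Numerator of the weight `w_i`: `f̂(d_i) · ∏_{k ≠ i} q(d_k | d_i)`. -/
def wNum {D : Type*} (q : D → D → ℝ≥0) (fhat : D → ℝ≥0) (m : ℕ)
    (i : Fin (m + 1)) (d : Fin (m + 1) → D) : ℝ≥0 :=
  fhat (d i) * ∏ k ∈ Finset.univ.erase i, q (d k) (d i)

/-- The weight `w_i(d₀, …, d_m)`; in `ℝ≥0`, division by zero yields `0`,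
matching the convention that `w_i = 0` when the denominator vanishes. -/
def weight {D : Type*} (q : D → D → ℝ≥0) (fhat : D → ℝ≥0) (m : ℕ)
    (i : Fin (m + 1)) (d : Fin (m + 1) → D) : ℝ≥0 :=
  wNum q fhat m i d / ∑ j, wNum q fhat m j d

/-- The proportionality hypothesis `H₀^∝`. -/
def PropHyp {D : Type*} (f : D → ℝ≥0) (q : D → D → ℝ≥0) (fhat : D → ℝ≥0)
    (m : ℕ) : Prop :=
  ∀ d : Fin (m + 1) → D,
    (∃ i, 0 < jointLaw f q m (swapTuple m i d)) →
      ∃ K : ℝ≥0, 0 < K ∧ ∀ i, fhat (d i) = K * f (d i)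

theorem wNum_comp {D : Type*} (q : D → D → ℝ≥0) (F : D → ℝ≥0) (m : ℕ)
    (i : Fin (m + 1)) (s : Equiv.Perm (Fin (m + 1))) (d : Fin (m + 1) → D) :
    wNum q F m i (d ∘ s) = wNum q F m (s i) d := by
  unfold wNum
  congr 1
  refine Finset.prod_equiv s ?_ ?_
  · intro k; simp
  · intro k _; rfl

theorem jointLaw_swap {D : Type*} (f : D → ℝ≥0) (q : D → D → ℝ≥0) (m : ℕ)
    (i : Fin (m + 1)) (d : Fin (m + 1) → D) :
    jointLaw f q m (swapTuple m i d) = wNum q f m i d := by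
  have h := wNum_comp q f m 0 (Equiv.swap 0 i) d
  rw [Equiv.swap_apply_left] at h
  exact h

theorem weight_swap {D : Type*} (q : D → D → ℝ≥0) (F : D → ℝ≥0) (m : ℕ)
    (i : Fin (m + 1)) (d : Fin (m + 1) → D) :
    weight q F m i (swapTuple m i d) = wNum q F m 0 d / ∑ j, wNum q F m j d := by
  unfold weight swapTuple
  simp only [wNum_comp, Equiv.swap_apply_right]
  congr 1
  exact Equiv.sum_comp (Equiv.swap 0 i) (fun j => wNum q F m j d)

theorem swap_swap {D : Type*} (m : ℕ) (i : Fin (m + 1)) (d : Fin (m + 1) → D) :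
    swapTuple m i (swapTuple m i d) = d := by
  funext k; simp [swapTuple]

theorem key_identity {D : Type*} (f : D → ℝ≥0) (q : D → D → ℝ≥0) (fhat : D → ℝ≥0)
    (m : ℕ) (hprop : PropHyp f q fhat m) (d : Fin (m + 1) → D) :
    ∑ i, jointLaw f q m (swapTuple m i d) * weight q fhat m i (swapTuple m i d)
      = jointLaw f q m d := by
  have h0 : jointLaw f q m d = wNum q f m 0 d := rfl
  simp only [weight_swap, jointLaw_swap]
  rw [h0, ← Finset.sum_mul]
  by_cases h : ∃ i, 0 < jointLaw f q m (swapTuple m i d)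
  · obtain ⟨K, hK, hKf⟩ := hprop d h
    have hw : ∀ j, wNum q fhat m j d = K * wNum q f m j d := by
      intro j; unfold wNum; rw [hKf j, mul_assoc]
    obtain ⟨i, hi⟩ := h
    rw [jointLaw_swap] at hi
    have hS : ∑ j, wNum q f m j d ≠ 0 := by
      intro hz
      rw [Finset.sum_eq_zero_iff] at hz
      exact hi.ne' (hz i (Finset.mem_univ i))
    simp only [hw]
    rw [← Finset.mul_sum, mul_div_mul_left _ _ hK.ne', mul_div_cancel₀ _ hS]
  · push Not at h
    have hz : ∀ i, wNum q f m i d = 0 := by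
      intro i
      have := h i
      rw [jointLaw_swap] at this
      exact le_antisymm this zero_le
    simp [hz]

/-- **(Bayes/invariance step.)** Under `H₀^∝`, the law of the tuple is invariant
under drawing an index `I` according to the weights and swapping it to the front:
for every `φ : 𝒟^(m+1) → [0,∞]`,
`Σ_d h(d) · Σ_i w_i(d) · φ(σ_i d) = Σ_d h(d) · φ(d)`. -/
theorem weighted_swap_invariance
    {D : Type*} [Countable D]
    (f : D → ℝ≥0) (q : D → D → ℝ≥0) (fhat : D → ℝ≥0)
    (m : ℕ) (hm : 1 ≤ m)
    (hf : ∑' d, f d = 1)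
    (hq : ∀ d, ∑' e, q e d = 1)
    (hprop : PropHyp f q fhat m)
    (φ : (Fin (m + 1) → D) → ℝ≥0∞) :
    ∑' d : Fin (m + 1) → D, (jointLaw f q m d : ℝ≥0∞) *
        ∑ i, (weight q fhat m i d : ℝ≥0∞) * φ (swapTuple m i d) =
      ∑' d : Fin (m + 1) → D, (jointLaw f q m d : ℝ≥0∞) * φ d := by
  simp only [Finset.mul_sum]
  rw [Summable.tsum_finsetSum (fun _ _ => ENNReal.summable)]
  have h1 : ∀ i : Fin (m + 1),
      ∑' d : Fin (m + 1) → D, (jointLaw f q m d : ℝ≥0∞) *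
        ((weight q fhat m i d : ℝ≥0∞) * φ (swapTuple m i d)) =
      ∑' d : Fin (m + 1) → D, (jointLaw f q m (swapTuple m i d) : ℝ≥0∞) *
        ((weight q fhat m i (swapTuple m i d) : ℝ≥0∞) * φ d) := by
    intro i
    let e : (Fin (m + 1) → D) ≃ (Fin (m + 1) → D) :=
      ⟨swapTuple m i, swapTuple m i, swap_swap m i, swap_swap m i⟩
    rw [← e.tsum_eq]
    refine tsum_congr fun d => ?_
    change (jointLaw f q m (swapTuple m i d) : ℝ≥0∞) *
        ((weight q fhat m i (swapTuple m i d) : ℝ≥0∞) *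
          φ (swapTuple m i (swapTuple m i d))) = _
    rw [swap_swap]
  rw [Finset.sum_congr rfl fun i _ => h1 i,
    ← Summable.tsum_finsetSum (fun _ _ => ENNReal.summable)]
  refine tsum_congr fun d => ?_
  rw [← key_identity f q fhat m hprop d]
  push_cast
  rw [Finset.sum_mul]
  exact Finset.sum_congr rfl fun i _ => (mul_assoc _ _ _).symm
end
end

section
/- (Validity of the conditional independence test in a stationary non-reactive environment, Theorem 1 combined with Proposition 1.) Suppose the law of the data D over trajectories has probability mass function f(d) = ∏_{t=1}^T pC(c_t) · a_t(x_t; c_t, h_{t−1}(d)) · r(y_t; c_t, x_t), where pC : 𝒞 → ℝ≥0 is the (time-invariant) context law and r : 𝒴 × 𝒞 × 𝒳 → ℝ≥0 is the (time-invariant) response law satisfying the null H₀^{⊥⊥,g}: r(y; c, x) = r(y; c, x') whenever g(x) = g(x'). Take f̂(d) = ∏_{t=1}^T a_t(x_t; c_t, h_{t−1}(d)), and let q be any resampling distribution such that q(d̃ | d) > 0 implies there exists a permutation π of {1, …, T} with (c̃_t, g(x̃_t), ỹ_t) = (c_{π(t)}, g(x_{π(t)}), y_{π(t)}) for all t. Then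 for every α ∈ [0,1], the weighted MC randomization p-value is valid: Σ_{(d₀,…,d_m) : p(d₀,…,d_m) ≤ α} h(d₀,…,d_m) ≤ α. -/
open scoped NNReal Classical BigOperators

noncomputable section

/-- The weighted MC randomization p-value. -/
def pValue {D : Type*} (q : D → D → ℝ≥0) (fhat : D → ℝ≥0) (m : ℕ)
    (S : D → ℝ) (d : Fin (m + 1) → D) : ℝ≥0 :=
  ∑ i, weight q fhat m i d * (if S (d 0) ≤ S (d i) then 1 else 0)

/-! Trajectory machinery. -/

variable {C X Y : Type*}

/-- Embedding of an index `s < t` into `Fin T`. -/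
def emb {T : ℕ} (t : Fin T) (s : Fin (t : ℕ)) : Fin T :=
  ⟨(s : ℕ), lt_trans s.isLt t.isLt⟩

/-- The history `h_{t−1}(d)`. -/
def hist {T : ℕ} (d : Fin T → C × X × Y) (t : Fin T) : Fin (t : ℕ) → C × X × Y :=
  fun s => d (emb t s)

/-- `f̂(d) = ∏_{t=1}^T a_t(x_t; c_t, h_{t−1}(d))`. -/
def assignLik {T : ℕ} (a : (t : Fin T) → X → C → (Fin (t : ℕ) → C × X × Y) → ℝ≥0)
    (d : Fin T → C × X × Y) : ℝ≥0 :=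
  ∏ t, a t (d t).2.1 (d t).1 (hist d t)

/-- The data law in a `C`-stationary strongly non-reactive environment under the
stationarity null `H₀^S`: `f(d) = ∏_t pC(c_t) · a_t(x_t; c_t, h_{t−1}(d)) ·
r(y_t; c_t, x_t)` with `pC` and `r` not depending on `t`. -/
def statTrajLaw {T : ℕ}
    (pC : C → ℝ≥0)
    (a : (t : Fin T) → X → C → (Fin (t : ℕ) → C × X × Y) → ℝ≥0)
    (r : Y → C → X → ℝ≥0)
    (d : Fin T → C × X × Y) : ℝ≥0 :=
  ∏ t, pC (d t).1 * a t (d t).2.1 (d t).1 (hist d t) *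
    r (d t).2.2 (d t).1 (d t).2.1


open scoped ENNReal

lemma aux_wNum_perm {D : Type*} (q : D → D → ℝ≥0) (f : D → ℝ≥0) (m : ℕ)
    (σ : Equiv.Perm (Fin (m + 1))) (i : Fin (m + 1)) (d : Fin (m + 1) → D) :
    wNum q f m i (d ∘ σ) = wNum q f m (σ i) d := by
  unfold wNum
  congr 1
  refine Finset.prod_bij (fun k _ => σ k) ?_ ?_ ?_ ?_
  · intro k hk
    simpa using hk
  · intro k _ l _ h
    exact σ.injective h
  · intro k hk
    refine ⟨σ.symm k, ?_, by simp⟩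
    simp only [Finset.mem_erase, Finset.mem_univ, and_true] at hk ⊢
    rintro h
    exact hk (by rw [← h]; simp)
  · intro k _
    rfl

/-- p-value with reference index `i`. -/
def auxPV {D : Type*} (q : D → D → ℝ≥0) (fhat : D → ℝ≥0) (m : ℕ)
    (S : D → ℝ) (i : Fin (m + 1)) (d : Fin (m + 1) → D) : ℝ≥0 :=
  ∑ j, weight q fhat m j d * (if S (d i) ≤ S (d j) then 1 else 0)

lemma aux_pv_perm {D : Type*} (q : D → D → ℝ≥0) (f : D → ℝ≥0) (m : ℕ) (S : D → ℝ)
    (σ : Equiv.Perm (Fin (m + 1))) (i : Fin (m + 1)) (d : Fin (m + 1) → D) :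
    auxPV q f m S i (d ∘ σ) = auxPV q f m S (σ i) d := by
  unfold auxPV weight
  simp only [aux_wNum_perm, Function.comp]
  rw [Equiv.sum_comp σ (fun j => wNum q f m j d)]
  exact Equiv.sum_comp σ (fun j => wNum q f m j d / (∑ j, wNum q f m j d) *
    (if S (d (σ i)) ≤ S (d j) then 1 else 0))

lemma aux_finite {D : Type*} (q : D → D → ℝ≥0) (f : D → ℝ≥0) (m : ℕ) (S : D → ℝ)
    (d : Fin (m + 1) → D) (α : ℝ≥0) :
    ∑ i, (if auxPV q f m S i d ≤ α then weight q f m i d else 0) ≤ α := by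
  rw [← Finset.sum_filter]
  rcases (Finset.univ.filter (fun i => auxPV q f m S i d ≤ α)).eq_empty_or_nonempty with h | h
  · rw [h]; simp
  · obtain ⟨i, hi, hmin⟩ := Finset.exists_min_image _ (fun i => S (d i)) h
    have hi' := (Finset.mem_filter.1 hi).2
    refine le_trans ?_ hi'
    unfold auxPV
    rw [Finset.sum_filter]
    refine Finset.sum_le_sum fun j _ => ?_
    split_ifs with h1 h2
    · simp
    · exact absurd (hmin j (Finset.mem_filter.2 ⟨Finset.mem_univ _, h1⟩)) h2
    · simp
    · simp

lemma aux_pi_tsum {D : Type*} (p : D → ℝ≥0∞) (hp : ∑' e, p e = 1) (m : ℕ) :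
    ∑' d : Fin m → D, ∏ k, p (d k) = 1 := by
  induction m with
  | zero => simp
  | succ n ih =>
    rw [← (Fin.consEquiv (fun _ : Fin (n + 1) => D)).tsum_eq, ENNReal.tsum_prod']
    simp only [Fin.consEquiv_apply, Fin.prod_univ_succ, Fin.cons_zero, Fin.cons_succ,
      ENNReal.tsum_mul_left, ih, mul_one, hp]

lemma aux_joint_tsum {D : Type*} (f : D → ℝ≥0) (q : D → D → ℝ≥0) (m : ℕ)
    (hf : ∑' d, (f d : ℝ≥0∞) = 1) (hq : ∀ d, ∑' e, (q e d : ℝ≥0∞) = 1) :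
    ∑' d : Fin (m + 1) → D, (wNum q f m 0 d : ℝ≥0∞) = 1 := by
  have h0 : ∀ d : Fin (m + 1) → D, (wNum q f m 0 d : ℝ≥0∞)
      = f (d 0) * ∏ k : Fin m, (q (d k.succ) (d 0) : ℝ≥0∞) := by
    intro d
    unfold wNum
    have : (Finset.univ.erase (0 : Fin (m + 1))) = Finset.univ.map (Fin.succEmb m) := by
      ext k
      simp only [Finset.mem_erase, Finset.mem_univ, and_true, Finset.mem_map, true_and]
      constructor
      · intro h
        obtain ⟨j, rfl⟩ := Fin.exists_succ_eq.2 h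
        exact ⟨j, rfl⟩
      · rintro ⟨j, rfl⟩
        exact Fin.succ_ne_zero j
    rw [this, Finset.prod_map]
    push_cast
    rfl
  simp only [h0]
  rw [← (Fin.consEquiv (fun _ : Fin (m + 1) => D)).tsum_eq, ENNReal.tsum_prod']
  simp only [Fin.consEquiv_apply, Fin.cons_zero, Fin.cons_succ, ENNReal.tsum_mul_left]
  rw [← hf]
  refine tsum_congr fun e => ?_
  rw [aux_pi_tsum (fun x => (q x e : ℝ≥0∞)) (hq e), mul_one]

lemma aux_coe_tsum {D : Type*} (f : D → ℝ≥0) (hf : ∑' d, f d = 1) :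
    ∑' d, (f d : ℝ≥0∞) = 1 := by
  have hs : Summable f := by
    by_contra h
    rw [tsum_eq_zero_of_not_summable h] at hf
    exact zero_ne_one hf
  rw [← ENNReal.coe_tsum hs, hf]; rfl

/-- Generic validity. -/
lemma aux_valid {D : Type*} (f fhat ρ : D → ℝ≥0) (q : D → D → ℝ≥0) (m : ℕ) (S : D → ℝ)
    (hf : ∑' d, f d = 1) (hq : ∀ d, ∑' e, q e d = 1)
    (hfac : ∀ d, f d = fhat d * ρ d) (hρ : ∀ d e, 0 < q e d → ρ e = ρ d) (α : ℝ≥0) :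
    (∑' dd : Fin (m + 1) → D,
      if pValue q fhat m S dd ≤ α then jointLaw f q m dd else 0) ≤ α := by
  have hW : ∀ i (d : Fin (m + 1) → D),
      wNum q f m i d = weight q fhat m i d * ∑ j, wNum q f m j d := by
    intro i d
    have hH : ∀ j, wNum q f m j d = wNum q fhat m j d * ρ (d j) := by
      intro j; unfold wNum; rw [hfac]; ring
    by_cases hz : ∑ j, wNum q fhat m j d = 0
    · have : wNum q fhat m i d = 0 := (Finset.sum_eq_zero_iff.1 hz) i (Finset.mem_univ _)
      rw [hH, weight, this]; simp
    · obtain ⟨j0, -, hj0⟩ := Finset.exists_ne_zero_of_sum_ne_zero hz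
      have hc : ∀ k, ρ (d k) = ρ (d j0) := by
        intro k
        by_cases hk : k = j0
        · rw [hk]
        · refine hρ _ _ (pos_iff_ne_zero.2 fun h => hj0 ?_)
          unfold wNum
          rw [Finset.prod_eq_zero (Finset.mem_erase.2 ⟨hk, Finset.mem_univ _⟩) h, mul_zero]
      simp only [hH, hc]
      rw [← Finset.sum_mul, weight, ← mul_assoc, div_mul_cancel₀ _ hz]
  set F : Fin (m + 1) → (Fin (m + 1) → D) → ℝ≥0 := fun i d =>
    if auxPV q fhat m S i d ≤ α then wNum q f m i d else 0 with hF
  have hsymF : ∀ i, ∑' d, (F i d : ℝ≥0∞) = ∑' d, (F 0 d : ℝ≥0∞) := by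
    intro i
    rw [← (Equiv.arrowCongr (Equiv.swap 0 i) (Equiv.refl D)).tsum_eq (fun d => (F 0 d : ℝ≥0∞))]
    refine tsum_congr fun d => ?_
    have : (Equiv.arrowCongr (Equiv.swap 0 i) (Equiv.refl D)) d = d ∘ (Equiv.swap 0 i) := by
      ext k; simp [Equiv.arrowCongr]
    rw [this]
    simp only [hF, aux_pv_perm, aux_wNum_perm, Equiv.swap_apply_left]
  have hsymH : ∀ i, ∑' d, (wNum q f m i d : ℝ≥0∞) = 1 := by
    intro i
    rw [← aux_joint_tsum f q m (aux_coe_tsum f hf) (fun d => aux_coe_tsum _ (hq d)),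
      ← (Equiv.arrowCongr (Equiv.swap 0 i) (Equiv.refl D)).tsum_eq
        (fun d => (wNum q f m 0 d : ℝ≥0∞))]
    refine tsum_congr fun d => ?_
    have : (Equiv.arrowCongr (Equiv.swap 0 i) (Equiv.refl D)) d = d ∘ (Equiv.swap 0 i) := by
      ext k; simp [Equiv.arrowCongr]
    rw [this]
    simp only [aux_wNum_perm, Equiv.swap_apply_left]
  have hpt : ∀ d, ∑ i, F i d ≤ α * ∑ i, wNum q f m i d := by
    intro d
    calc ∑ i, F i d = (∑ i, (if auxPV q fhat m S i d ≤ α then weight q fhat m i d else 0))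
          * ∑ j, wNum q f m j d := by
          rw [Finset.sum_mul]
          refine Finset.sum_congr rfl fun i _ => ?_
          simp only [hF]
          split_ifs
          · exact hW i d
          · simp
      _ ≤ _ := by gcongr; exact aux_finite q fhat m S d α
  have hmain : ((m + 1 : ℕ) : ℝ≥0∞) * ∑' d, (F 0 d : ℝ≥0∞) ≤ ((m + 1 : ℕ) : ℝ≥0∞) * α := by
    calc ((m + 1 : ℕ) : ℝ≥0∞) * ∑' d, (F 0 d : ℝ≥0∞)
        = ∑ i, ∑' d, (F i d : ℝ≥0∞) := by simp [hsymF]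
      _ = ∑' d, ∑ i, (F i d : ℝ≥0∞) :=
          (Summable.tsum_finsetSum fun i _ => ENNReal.summable).symm
      _ ≤ ∑' d, (α : ℝ≥0∞) * ∑ i, (wNum q f m i d : ℝ≥0∞) := by
          refine ENNReal.tsum_le_tsum fun d => ?_
          exact_mod_cast hpt d
      _ = α * ∑ i, ∑' d, (wNum q f m i d : ℝ≥0∞) := by
          rw [ENNReal.tsum_mul_left, Summable.tsum_finsetSum fun i _ => ENNReal.summable]
      _ = _ := by simp [hsymH, mul_comm]
  have hfin : ∑' d, (F 0 d : ℝ≥0∞) ≤ α :=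
    (ENNReal.mul_le_mul_iff_right (by simp) (ENNReal.natCast_ne_top _)).1 hmain
  change ∑' d, F 0 d ≤ α
  by_cases hs : Summable (F 0)
  · rw [← ENNReal.coe_tsum hs] at hfin
    exact_mod_cast hfin
  · rw [tsum_eq_zero_of_not_summable hs]; exact zero_le

/-- **(Validity of the conditional independence test in a stationary non-reactive
environment, Theorem 1 combined with Proposition 1.)** Under the null
`H₀^{⊥⊥,g}` (the time-invariant response law `r` depends on the action only
through `g`), with `f̂ = assignLik a` and a resampling distribution `q` each of
whose positive-probability draws agrees with some permutation of the observed
trajectory in contexts, responses, and `g`-evaluations of actions, the weighted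
MC randomization p-value is valid. -/
theorem conditional_independence_test_valid
    {G : Type*} [Countable C] [Countable X] [Countable Y]
    (T : ℕ) (hT : 1 ≤ T)
    (pC : C → ℝ≥0)
    (a : (t : Fin T) → X → C → (Fin (t : ℕ) → C × X × Y) → ℝ≥0)
    (r : Y → C → X → ℝ≥0)
    (g : X → G)
    (hnull : ∀ (y : Y) (c : C) (x x' : X), g x = g x' → r y c x = r y c x')
    (q : (Fin T → C × X × Y) → (Fin T → C × X × Y) → ℝ≥0)
    (m : ℕ) (hm : 1 ≤ m)
    (S : (Fin T → C × X × Y) → ℝ)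
    (hf : ∑' d, statTrajLaw pC a r d = 1)
    (hq : ∀ d, ∑' e, q e d = 1)
    (hperm : ∀ d dtil, 0 < q dtil d →
      ∃ π : Equiv.Perm (Fin T), ∀ t,
        (dtil t).1 = (d (π t)).1 ∧ g (dtil t).2.1 = g (d (π t)).2.1 ∧
          (dtil t).2.2 = (d (π t)).2.2) :
    ∀ α : ℝ≥0, α ≤ 1 →
      (∑' dd : Fin (m + 1) → (Fin T → C × X × Y),
        if pValue q (assignLik a) m S dd ≤ α then
          jointLaw (statTrajLaw pC a r) q m dd
        else 0) ≤ α := by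
  intro α _
  refine aux_valid (statTrajLaw pC a r) (assignLik a)
    (fun d => ∏ t, pC (d t).1 * r (d t).2.2 (d t).1 (d t).2.1) q m S hf hq ?_ ?_ α
  · intro d
    unfold statTrajLaw assignLik
    rw [← Finset.prod_mul_distrib]
    exact Finset.prod_congr rfl fun t _ => by ring
  · intro d e h
    obtain ⟨π, hπ⟩ := hperm d e h
    rw [← Equiv.prod_comp π (fun t => pC (d t).1 * r (d t).2.2 (d t).1 (d t).2.1)]
    refine Finset.prod_congr rfl fun t _ => ?_
    obtain ⟨h1, h2, h3⟩ := hπ t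
    rw [h1, h3, hnull _ _ _ _ h2]
end
end
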